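/- arXiv:1310.0291 — 2 statements merged into one kernel-verified Lean document; each statement's English description precedes it below -/
import Mathlib

section
/- Data processing inequality for relative entropy under quantum measurement (finite dimensions): let ρ, σ be density matrices on ℂ^d with supp(ρ) ⊆ supp(σ), and let (M_y)_{y∈Y} be a finite POVM (M_y ⪰ 0, Σ_y M_y = I). Define classical distributions P(y) = tr(ρ M_y), P'(y) = tr(σ M_y). Then D(P‖P') ≤ D(ρ‖σ), where D(ρ‖σ) = tr ρ(log ρ − log σ). -/
open scoped Matrix BigOperators ComplexOrder

variable {d : ℕ}

/-- Matrix logarithm of a Hermitian matrix via its spectral decomposition. -/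
noncomputable def hermLog {A : Matrix (Fin d) (Fin d) ℂ} (hA : A.IsHermitian) :
    Matrix (Fin d) (Fin d) ℂ :=
  (hA.eigenvectorUnitary : Matrix (Fin d) (Fin d) ℂ) *
    Matrix.diagonal (fun i => (Real.log (hA.eigenvalues i) : ℂ)) *
    star (hA.eigenvectorUnitary : Matrix (Fin d) (Fin d) ℂ)

/-- Quantum relative entropy `D(ρ‖σ) = tr ρ(log ρ − log σ)`. -/
noncomputable def qRelEntropy {ρ σ : Matrix (Fin d) (Fin d) ℂ}
    (hρ : ρ.IsHermitian) (hσ : σ.IsHermitian) : ℝ :=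
  (Matrix.trace (ρ * (hermLog hρ - hermLog hσ))).re

namespace MDP

noncomputable def kk (p q s : ℝ) : ℝ := (p - q) * p / (q + s * (p - q)) - (p - q)

lemma kk_integral {p q : ℝ} (hp : 0 ≤ p) (hq : 0 ≤ q) (h : q = 0 → p = 0) :
    IntervalIntegrable (kk p q) MeasureTheory.volume 0 1 ∧
      ∫ s in (0:ℝ)..1, kk p q s = p * Real.log (p / q) - (p - q) := by
  rcases hp.eq_or_lt with rfl | hp
  · have : kk 0 q = fun _ => q := by ext s; simp [kk]
    rw [this]
    simp
  · have hq : 0 < q := lt_of_le_of_ne hq (fun e => hp.ne' (h e.symm))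
    have hm : ∀ s ∈ Set.uIcc (0:ℝ) 1, 0 < q + s * (p - q) := by
      intro s hs
      rw [Set.uIcc_of_le zero_le_one] at hs
      obtain ⟨h0, h1⟩ := hs
      rcases h0.eq_or_lt with rfl | h0
      · simpa using hq
      · nlinarith [mul_pos h0 hp, mul_nonneg (sub_nonneg.2 h1) hq.le]
    have hint : IntervalIntegrable (kk p q) MeasureTheory.volume 0 1 := by
      apply ContinuousOn.intervalIntegrable
      unfold kk
      apply ContinuousOn.sub _ continuousOn_const
      apply ContinuousOn.div continuousOn_const (by fun_prop)
      intro s hs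
      exact (hm s hs).ne'
    refine ⟨hint, ?_⟩
    have hd : ∀ s ∈ Set.uIcc (0:ℝ) 1,
        HasDerivAt (fun s => p * Real.log (q + s * (p - q)) - s * (p - q)) (kk p q s) s := by
      intro s hs
      have h1 : HasDerivAt (fun s : ℝ => s * (p - q)) (p - q) s := by
        simpa using (hasDerivAt_id s).mul_const (p - q)
      have h2 := (((h1.const_add q).log (hm s hs).ne').const_mul p).sub h1
      refine h2.congr_deriv ?_
      unfold kk
      ring
    rw [intervalIntegral.integral_eq_sub_of_hasDerivAt hd hint, Real.log_div hp.ne' hq.ne']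
    simp
    ring

lemma iisum {ι : Type*} [Fintype ι] {f : ι → ℝ → ℝ}
    (h : ∀ i ∈ Finset.univ, IntervalIntegrable (f i) MeasureTheory.volume 0 1) :
    IntervalIntegrable (fun s => ∑ i, f i s) MeasureTheory.volume 0 1 := by
  have := IntervalIntegrable.sum Finset.univ h
  have e : (∑ i, f i) = fun s => ∑ i, f i s := by
    ext s
    simp
  rwa [e] at this

lemma kk_eq {p q s : ℝ} (hp : 0 ≤ p) (hq : 0 ≤ q) (h0 : 0 < s) (h1 : s < 1) :
    kk p q s = (1 - s) * (2 * ((p - q) / (q + s * (p - q))) * (p - q)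
      - ((p - q) / (q + s * (p - q))) ^ 2 * (q + s * (p - q))) := by
  by_cases hm : q + s * (p - q) = 0
  · have hp0 : p = 0 := by nlinarith [mul_nonneg h0.le hp, mul_nonneg (sub_nonneg.2 h1.le) hq]
    have hq0 : q = 0 := by
      subst hp0
      have : (1 - s) * q = 0 := by linarith
      rcases mul_eq_zero.1 this with h | h
      · linarith
      · exact h
    subst hp0 hq0
    simp [kk]
  · unfold kk
    obtain ⟨c, hc⟩ : ∃ c, c = (p - q) / (q + s * (p - q)) := ⟨_, rfl⟩
    have hδ : p - q = c * (q + s * (p - q)) := by rw [hc, div_mul_cancel₀ _ hm]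
    have e : (p - q) * p / (q + s * (p - q)) = c * p := by rw [hc]; ring
    rw [e, ← hc]
    linear_combination (-c * (1 - s) - 1) * hδ

lemma kk_ge {p q s : ℝ} (hp : 0 ≤ p) (hq : 0 ≤ q) (h0 : 0 < s) (h1 : s < 1) (z w : ℂ) :
    (1 - s) * (2 * (p - q) * (z * star w).re - (q + s * (p - q)) * Complex.normSq z)
      ≤ Complex.normSq w * kk p q s := by
  rw [kk_eq hp hq h0 h1]
  have hm0 : 0 ≤ q + s * (p - q) := by
    nlinarith [mul_nonneg h0.le hp, mul_nonneg (sub_nonneg.2 h1.le) hq]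
  by_cases hm : q + s * (p - q) = 0
  · have hp0 : p = 0 := by nlinarith [mul_nonneg h0.le hp, mul_nonneg (sub_nonneg.2 h1.le) hq]
    have hq0 : q = 0 := by
      subst hp0
      have : (1 - s) * q = 0 := by linarith
      rcases mul_eq_zero.1 this with h | h
      · linarith
      · exact h
    subst hp0 hq0
    simp
  · set m := q + s * (p - q) with hmdef
    obtain ⟨c, hc⟩ : ∃ c, c = (p - q) / m := ⟨_, rfl⟩
    have hδ : p - q = c * m := by rw [hc]; field_simp
    rw [← hc, hδ]
    simp only [Complex.normSq_apply, Complex.mul_re, Complex.star_def, Complex.conj_re,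
      Complex.conj_im]
    have key : 0 ≤ (1 - s) * m * ((z.re - c * w.re) ^ 2 + (z.im - c * w.im) ^ 2) := by
      have : 0 < 1 - s := by linarith
      positivity
    nlinarith [key]

lemma exists_sq {A : Matrix (Fin d) (Fin d) ℂ} (hA : A.PosSemidef) :
    ∃ B : Matrix (Fin d) (Fin d) ℂ, A = Bᴴ * B := by
  open scoped MatrixOrder Matrix.Norms.L2Operator in
  exact CStarAlgebra.nonneg_iff_eq_star_mul_self.1 hA.nonneg

lemma trace_mul_re_nonneg {A B : Matrix (Fin d) (Fin d) ℂ} (hA : A.PosSemidef)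
    (hB : B.PosSemidef) : 0 ≤ (A * B).trace.re := by
  obtain ⟨C, rfl⟩ := exists_sq hA
  rw [Matrix.mul_assoc, Matrix.trace_mul_comm]
  exact (Complex.le_def.1 (hB.mul_mul_conjTranspose_same C).trace_nonneg).1

lemma trace_im {A B : Matrix (Fin d) (Fin d) ℂ} (hA : A.PosSemidef)
    (hB : B.PosSemidef) : (A * B).trace.im = 0 := by
  obtain ⟨C, rfl⟩ := exists_sq hA
  rw [Matrix.mul_assoc, Matrix.trace_mul_comm]
  exact (Complex.le_def.1 (hB.mul_mul_conjTranspose_same C).trace_nonneg).2.symm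

lemma mul_eq_zero_of_trace {A B : Matrix (Fin d) (Fin d) ℂ} (hA : A.PosSemidef)
    (hB : B.PosSemidef) (h : (A * B).trace.re = 0) : A * B = 0 := by
  have h' : (A * B).trace = 0 := Complex.ext h (trace_im hA hB)
  obtain ⟨C, rfl⟩ := exists_sq hA
  obtain ⟨E, rfl⟩ := exists_sq hB
  have : ((C * Eᴴ)ᴴ * (C * Eᴴ)).trace = 0 := by
    rw [← h', Matrix.trace_mul_comm]
    simp only [Matrix.conjTranspose_mul, Matrix.conjTranspose_conjTranspose]
    rw [← Matrix.mul_assoc, Matrix.trace_mul_comm]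
    simp only [Matrix.mul_assoc]
  rw [Matrix.trace_conjTranspose_mul_self_eq_zero_iff] at this
  calc Cᴴ * C * (Eᴴ * E) = Cᴴ * (C * Eᴴ) * E := by simp only [Matrix.mul_assoc]
    _ = 0 := by rw [this]; simp

lemma jensen_sq {Y : Type*} [Fintype Y] {τ : Matrix (Fin d) (Fin d) ℂ} (hτ : τ.PosSemidef)
    (M : Y → Matrix (Fin d) (Fin d) ℂ)
    (hMpos : ∀ y, (M y).PosSemidef) (hMsum : ∑ y, M y = 1) (c : Y → ℝ)
    (X : Matrix (Fin d) (Fin d) ℂ) (hX : X = ∑ y, (c y : ℂ) • M y) :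
    Xᴴ = X ∧ (τ * (X * X)).trace.re ≤ ∑ y, c y ^ 2 * (τ * M y).trace.re := by
  have hXh : Xᴴ = X := by
    rw [hX, Matrix.conjTranspose_sum]
    refine Finset.sum_congr rfl fun y _ => ?_
    rw [Matrix.conjTranspose_smul, (hMpos y).1.eq]
    simp
  refine ⟨hXh, ?_⟩
  have e : ∑ y, ((c y : ℂ) • (1 : Matrix (Fin d) (Fin d) ℂ) - X) * M y *
      ((c y : ℂ) • (1 : Matrix (Fin d) (Fin d) ℂ) - X)ᴴ
      = ∑ y, ((c y : ℂ) ^ 2) • M y - X * X := by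
    have : ∀ y, ((c y : ℂ) • (1 : Matrix (Fin d) (Fin d) ℂ) - X) * M y *
      ((c y : ℂ) • (1 : Matrix (Fin d) (Fin d) ℂ) - X)ᴴ =
        ((c y : ℂ) ^ 2) • M y - X * ((c y : ℂ) • M y) - ((c y : ℂ) • M y) * X
          + X * M y * X := by
      intro y
      rw [Matrix.conjTranspose_sub, hXh, Matrix.conjTranspose_smul, Matrix.conjTranspose_one]
      simp only [Complex.star_def, Complex.conj_ofReal, sub_mul, mul_sub, smul_mul_assoc,
        mul_smul_comm, one_mul, mul_one, pow_two, mul_smul, smul_sub]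
      abel
    simp only [this, Finset.sum_add_distrib, Finset.sum_sub_distrib, ← Finset.mul_sum,
      ← Finset.sum_mul, hMsum, ← hX, mul_one]
    abel
  have h0 : 0 ≤ (τ * (∑ y, ((c y : ℂ) ^ 2) • M y - X * X)).trace.re := by
    rw [← e, Finset.mul_sum, Matrix.trace_sum, Complex.re_sum]
    exact Finset.sum_nonneg fun y _ =>
      trace_mul_re_nonneg hτ ((hMpos y).mul_mul_conjTranspose_same _)
  rw [mul_sub, Matrix.trace_sub, Complex.sub_re, Finset.mul_sum, Matrix.trace_sum,
    Complex.re_sum] at h0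
  have e2 : ∀ y, (τ * ((c y : ℂ) ^ 2 • M y)).trace.re = c y ^ 2 * (τ * M y).trace.re := by
    intro y
    rw [mul_smul_comm, Matrix.trace_smul, smul_eq_mul, ← Complex.ofReal_pow,
      Complex.re_ofReal_mul]
  simp only [e2] at h0
  linarith

lemma trace_diag_left (p : Fin d → ℝ) (Z W : Matrix (Fin d) (Fin d) ℂ) :
    (Matrix.diagonal (fun i => (p i : ℂ)) * (Z * Wᴴ)).trace.re
      = ∑ i, ∑ j, p i * (Z i j * star (W i j)).re := by
  simp only [Matrix.trace, Matrix.diag, Matrix.diagonal_mul]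
  simp only [Matrix.mul_apply, Complex.re_sum,
    Complex.re_ofReal_mul, Finset.mul_sum, Matrix.conjTranspose_apply]

lemma trace_diag_right (q : Fin d → ℝ) (Z W : Matrix (Fin d) (Fin d) ℂ) :
    (Matrix.diagonal (fun i => (q i : ℂ)) * (Wᴴ * Z)).trace.re
      = ∑ i, ∑ j, q j * (Z i j * star (W i j)).re := by
  rw [Finset.sum_comm]
  simp only [Matrix.trace, Matrix.diag, Matrix.diagonal_mul]
  simp only [Matrix.mul_apply, Complex.re_sum,
    Complex.re_ofReal_mul, Finset.mul_sum, Matrix.conjTranspose_apply]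
  simp only [mul_comm]

lemma spec {A : Matrix (Fin d) (Fin d) ℂ} (hA : A.IsHermitian) :
    A = (hA.eigenvectorUnitary : Matrix (Fin d) (Fin d) ℂ) *
    Matrix.diagonal (fun i => (hA.eigenvalues i : ℂ)) *
    (hA.eigenvectorUnitary : Matrix (Fin d) (Fin d) ℂ)ᴴ := by
  conv_lhs => rw [hA.spectral_theorem, Unitary.conjStarAlgAut_apply]
  rfl

lemma normSq_eq (z : ℂ) : (z * star z).re = Complex.normSq z := by
  simp [Complex.normSq_apply, Complex.mul_re]

/-- trace of `ρ X` in the two eigenbases -/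
lemma tr_left {U V : Matrix (Fin d) (Fin d) ℂ} (hV : V * Vᴴ = 1) (p : Fin d → ℝ)
    (X : Matrix (Fin d) (Fin d) ℂ) :
    (U * Matrix.diagonal (fun i => (p i : ℂ)) * Uᴴ * X).trace.re
      = ∑ i, ∑ j, p i * ((Uᴴ * X * V) i j * star ((Uᴴ * V) i j)).re := by
  rw [← trace_diag_left]
  rw [Matrix.mul_assoc, Matrix.mul_assoc, Matrix.trace_mul_comm]
  congr 2
  simp only [Matrix.conjTranspose_mul, Matrix.conjTranspose_conjTranspose, Matrix.mul_assoc]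
  rw [← Matrix.mul_assoc V, hV, Matrix.one_mul]

lemma tr_right {U V : Matrix (Fin d) (Fin d) ℂ} (hU : U * Uᴴ = 1) (q : Fin d → ℝ)
    (X : Matrix (Fin d) (Fin d) ℂ) :
    (V * Matrix.diagonal (fun i => (q i : ℂ)) * Vᴴ * X).trace.re
      = ∑ i, ∑ j, q j * ((Uᴴ * X * V) i j * star ((Uᴴ * V) i j)).re := by
  rw [← trace_diag_right]
  rw [Matrix.mul_assoc, Matrix.mul_assoc, Matrix.trace_mul_comm]
  congr 2
  simp only [Matrix.conjTranspose_mul, Matrix.conjTranspose_conjTranspose, Matrix.mul_assoc]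
  rw [← Matrix.mul_assoc U, hU, Matrix.one_mul]

lemma tr_left_sq {U V : Matrix (Fin d) (Fin d) ℂ} (hV : V * Vᴴ = 1) (p : Fin d → ℝ)
    (X : Matrix (Fin d) (Fin d) ℂ) (hX : Xᴴ = X) :
    (U * Matrix.diagonal (fun i => (p i : ℂ)) * Uᴴ * (X * X)).trace.re
      = ∑ i, ∑ j, p i * Complex.normSq ((Uᴴ * X * V) i j) := by
  simp only [← normSq_eq]
  rw [← trace_diag_left]
  rw [Matrix.mul_assoc, Matrix.mul_assoc, Matrix.trace_mul_comm]
  congr 2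
  simp only [Matrix.conjTranspose_mul, Matrix.conjTranspose_conjTranspose, Matrix.mul_assoc, hX]
  rw [← Matrix.mul_assoc V, hV, Matrix.one_mul]

lemma tr_right_sq {U V : Matrix (Fin d) (Fin d) ℂ} (hU : U * Uᴴ = 1) (q : Fin d → ℝ)
    (X : Matrix (Fin d) (Fin d) ℂ) (hX : Xᴴ = X) :
    (V * Matrix.diagonal (fun i => (q i : ℂ)) * Vᴴ * (X * X)).trace.re
      = ∑ i, ∑ j, q j * Complex.normSq ((Uᴴ * X * V) i j) := by
  simp only [← normSq_eq]
  rw [← trace_diag_right]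
  rw [Matrix.mul_assoc, Matrix.mul_assoc, Matrix.trace_mul_comm]
  congr 2
  simp only [Matrix.conjTranspose_mul, Matrix.conjTranspose_conjTranspose, Matrix.mul_assoc, hX]
  rw [← Matrix.mul_assoc U, hU, Matrix.one_mul]

lemma pointwise {Y : Type*} [Fintype Y]
    {ρ σ U V : Matrix (Fin d) (Fin d) ℂ} {p q : Fin d → ℝ}
    (hρ : ρ.PosSemidef) (hσ : σ.PosSemidef)
    (hU : U * Uᴴ = 1) (hV : V * Vᴴ = 1)
    (hp : ∀ i, 0 ≤ p i) (hq : ∀ i, 0 ≤ q i)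
    (eρ : ρ = U * Matrix.diagonal (fun i => (p i : ℂ)) * Uᴴ)
    (eσ : σ = V * Matrix.diagonal (fun i => (q i : ℂ)) * Vᴴ)
    (M : Y → Matrix (Fin d) (Fin d) ℂ)
    (hMpos : ∀ y, (M y).PosSemidef) (hMsum : ∑ y, M y = 1)
    {s : ℝ} (h0 : 0 < s) (h1 : s < 1) :
    ∑ y, kk (ρ * M y).trace.re (σ * M y).trace.re s ≤
      ∑ i, ∑ j, Complex.normSq ((Uᴴ * V) i j) * kk (p i) (q j) s := by
  obtain ⟨P, hP⟩ : ∃ P : Y → ℝ, P = fun y => (ρ * M y).trace.re := ⟨_, rfl⟩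
  obtain ⟨Q, hQ⟩ : ∃ Q : Y → ℝ, Q = fun y => (σ * M y).trace.re := ⟨_, rfl⟩
  have hP' : ∀ y, (ρ * M y).trace.re = P y := fun y => by rw [hP]
  have hQ' : ∀ y, (σ * M y).trace.re = Q y := fun y => by rw [hQ]
  have hP0 : ∀ y, 0 ≤ P y := fun y => by rw [← hP']; exact trace_mul_re_nonneg hρ (hMpos y)
  have hQ0 : ∀ y, 0 ≤ Q y := fun y => by rw [← hQ']; exact trace_mul_re_nonneg hσ (hMpos y)
  obtain ⟨c, hc⟩ : ∃ c : Y → ℝ, c = fun y => (P y - Q y) / (Q y + s * (P y - Q y)) := ⟨_, rfl⟩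
  obtain ⟨X, hX⟩ : ∃ X, X = ∑ y, (c y : ℂ) • M y := ⟨_, rfl⟩
  obtain ⟨hXh, jρ⟩ := jensen_sq hρ M hMpos hMsum c X hX
  obtain ⟨-, jσ⟩ := jensen_sq hσ M hMpos hMsum c X hX
  have lin : ∀ τ : Matrix (Fin d) (Fin d) ℂ, (τ * X).trace.re = ∑ y, c y * (τ * M y).trace.re := by
    intro τ
    rw [hX, Finset.mul_sum, Matrix.trace_sum, Complex.re_sum]
    refine Finset.sum_congr rfl fun y _ => ?_
    rw [mul_smul_comm, Matrix.trace_smul, smul_eq_mul, Complex.re_ofReal_mul]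
  have lρ := lin ρ
  have lσ := lin σ
  simp only [hP', hQ'] at jρ jσ lρ lσ ⊢
  have t1 := tr_left (U := U) hV p X
  have t2 := tr_right (V := V) hU q X
  have t3 := tr_left_sq (U := U) hV p X hXh
  have t4 := tr_right_sq (V := V) hU q X hXh
  rw [← eρ] at t1 t3
  rw [← eσ] at t2 t4
  calc ∑ y, kk (P y) (Q y) s
      = ∑ y, (1 - s) * (2 * (c y) * (P y - Q y) - (c y) ^ 2 * (Q y + s * (P y - Q y))) := by
        refine Finset.sum_congr rfl fun y _ => ?_
        rw [kk_eq (hP0 y) (hQ0 y) h0 h1, hc]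
    _ = (1 - s) * (2 * (∑ y, c y * P y - ∑ y, c y * Q y)
          - ((1 - s) * ∑ y, c y ^ 2 * Q y + s * ∑ y, c y ^ 2 * P y)) := by
        rw [← Finset.mul_sum]
        simp only [Finset.mul_sum, ← Finset.sum_sub_distrib, ← Finset.sum_add_distrib]
        refine Finset.sum_congr rfl fun y _ => ?_
        ring
    _ ≤ (1 - s) * (2 * ((ρ * X).trace.re - (σ * X).trace.re)
          - ((1 - s) * (σ * (X * X)).trace.re + s * (ρ * (X * X)).trace.re)) := by
        rw [lρ, lσ]
        have h1' : 0 ≤ 1 - s := by linarith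
        gcongr
    _ = ∑ i, ∑ j, (1 - s) * (2 * (p i - q j) * ((Uᴴ * X * V) i j * star ((Uᴴ * V) i j)).re
          - (q j + s * (p i - q j)) * Complex.normSq ((Uᴴ * X * V) i j)) := by
        rw [t1, t2, t3, t4]
        simp only [Finset.mul_sum, ← Finset.sum_sub_distrib, ← Finset.sum_add_distrib]
        refine Finset.sum_congr rfl fun i _ => Finset.sum_congr rfl fun j _ => ?_
        ring
    _ ≤ _ := Finset.sum_le_sum fun i _ => Finset.sum_le_sum fun j _ =>
        kk_ge (hp i) (hq j) h0 h1 _ _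

end MDP

/-- Data processing inequality for relative entropy under a quantum measurement:
if `supp ρ ⊆ supp σ` and `(M y)` is a POVM, the classical relative entropy of the
measurement outcome distributions is bounded by the quantum relative entropy. -/
theorem measurement_data_processing {Y : Type*} [Fintype Y]
    (ρ σ : Matrix (Fin d) (Fin d) ℂ)
    (hρ : ρ.PosSemidef) (hσ : σ.PosSemidef)
    (hρtr : Matrix.trace ρ = 1) (hσtr : Matrix.trace σ = 1)
    (hsupp : ∀ v : Fin d → ℂ, σ *ᵥ v = 0 → ρ *ᵥ v = 0)
    (M : Y → Matrix (Fin d) (Fin d) ℂ)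
    (hMpos : ∀ y, (M y).PosSemidef) (hMsum : ∑ y, M y = 1) :
    ∑ y, (Matrix.trace (ρ * M y)).re *
        Real.log ((Matrix.trace (ρ * M y)).re / (Matrix.trace (σ * M y)).re)
      ≤ qRelEntropy hρ.1 hσ.1 := by
  have eρ := MDP.spec hρ.1
  have eσ := MDP.spec hσ.1
  have hp := hρ.eigenvalues_nonneg
  have hq := hσ.eigenvalues_nonneg
  have hU : (hρ.1.eigenvectorUnitary : Matrix (Fin d) (Fin d) ℂ) *
      (hρ.1.eigenvectorUnitary : Matrix (Fin d) (Fin d) ℂ)ᴴ = 1 :=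
    Unitary.coe_mul_star_self _
  have hV : (hσ.1.eigenvectorUnitary : Matrix (Fin d) (Fin d) ℂ) *
      (hσ.1.eigenvectorUnitary : Matrix (Fin d) (Fin d) ℂ)ᴴ = 1 :=
    Unitary.coe_mul_star_self _
  have hLρ : hermLog hρ.1 = (hρ.1.eigenvectorUnitary : Matrix (Fin d) (Fin d) ℂ) *
    Matrix.diagonal (fun i => (Real.log (hρ.1.eigenvalues i) : ℂ)) *
    (hρ.1.eigenvectorUnitary : Matrix (Fin d) (Fin d) ℂ)ᴴ := rfl
  have hLσ : hermLog hσ.1 = (hσ.1.eigenvectorUnitary : Matrix (Fin d) (Fin d) ℂ) *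
    Matrix.diagonal (fun i => (Real.log (hσ.1.eigenvalues i) : ℂ)) *
    (hσ.1.eigenvectorUnitary : Matrix (Fin d) (Fin d) ℂ)ᴴ := rfl
  unfold qRelEntropy
  rw [hLρ, hLσ]
  generalize hρ.1.eigenvalues = p at *
  generalize hσ.1.eigenvalues = q at *
  generalize (hρ.1.eigenvectorUnitary : Matrix (Fin d) (Fin d) ℂ) = U at *
  generalize (hσ.1.eigenvectorUnitary : Matrix (Fin d) (Fin d) ℂ) = V at *
  have hU' : Uᴴ * U = 1 := mul_eq_one_comm.1 hU
  have hV' : Vᴴ * V = 1 := mul_eq_one_comm.1 hV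
  -- support conditions
  have hPQ : ∀ y, (σ * M y).trace.re = 0 → (ρ * M y).trace.re = 0 := by
    intro y hy
    have h := MDP.mul_eq_zero_of_trace hσ (hMpos y) hy
    have : ρ * M y = 0 := by
      ext i j
      have h2 : σ *ᵥ (fun k => M y k j) = 0 := by
        ext l
        have := congrFun (congrFun h l) j
        simpa [Matrix.mul_apply, Matrix.mulVec, dotProduct] using this
      have := congrFun (hsupp _ h2) i
      simpa [Matrix.mul_apply, Matrix.mulVec, dotProduct] using this
    rw [this]
    simp
  have hpq : ∀ i j, q j = 0 → p i = 0 ∨ (Uᴴ * V) i j = 0 := by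
    intro i j hj
    have e1 : σ * V = V * Matrix.diagonal (fun i => (q i : ℂ)) := by
      rw [eσ, Matrix.mul_assoc, hV', Matrix.mul_one]
    have h2 : σ *ᵥ (fun k => V k j) = 0 := by
      ext l
      have := congrFun (congrFun e1 l) j
      rw [Matrix.mul_diagonal, hj] at this
      simpa [Matrix.mul_apply, Matrix.mulVec, dotProduct] using this
    have h3 : ∀ l, (ρ * V) l j = 0 := by
      intro l
      have := congrFun (hsupp _ h2) l
      simpa [Matrix.mul_apply, Matrix.mulVec, dotProduct] using this
    have h4 : (Uᴴ * (ρ * V)) i j = 0 := by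
      rw [Matrix.mul_apply]
      simp [h3]
    have e2 : Uᴴ * (ρ * V) = Matrix.diagonal (fun i => (p i : ℂ)) * (Uᴴ * V) := by
      rw [eρ]
      simp only [Matrix.mul_assoc]
      rw [← Matrix.mul_assoc Uᴴ U, hU', Matrix.one_mul]
    rw [e2, Matrix.diagonal_mul] at h4
    simpa using h4
  -- the integrated inequality
  have hY : ∀ y, _ := fun y => MDP.kk_integral (MDP.trace_mul_re_nonneg hρ (hMpos y))
    (MDP.trace_mul_re_nonneg hσ (hMpos y)) (hPQ y)
  have hIJ : ∀ i j, IntervalIntegrable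
      (fun s => Complex.normSq ((Uᴴ * V) i j) * MDP.kk (p i) (q j) s) MeasureTheory.volume 0 1 ∧
      ∫ s in (0:ℝ)..1, Complex.normSq ((Uᴴ * V) i j) * MDP.kk (p i) (q j) s =
        Complex.normSq ((Uᴴ * V) i j) *
          (p i * Real.log (p i) - p i * Real.log (q j) - (p i - q j)) := by
    intro i j
    by_cases hw : (Uᴴ * V) i j = 0
    · simp [hw]
    · have hz : q j = 0 → p i = 0 := fun h => (hpq i j h).resolve_right hw
      obtain ⟨a, b⟩ := MDP.kk_integral (hp i) (hq j) hz
      refine ⟨a.const_mul _, ?_⟩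
      rw [intervalIntegral.integral_const_mul, b]
      by_cases hpi : p i = 0
      · simp [hpi]
      · rw [Real.log_div hpi (fun h => hpi (hz h))]
        ring
  have main : ∫ s in (0:ℝ)..1, ∑ y, MDP.kk (ρ * M y).trace.re (σ * M y).trace.re s ≤
      ∫ s in (0:ℝ)..1, ∑ i, ∑ j, Complex.normSq ((Uᴴ * V) i j) * MDP.kk (p i) (q j) s := by
    apply intervalIntegral.integral_mono_on_of_le_Ioo zero_le_one
    · exact MDP.iisum fun y _ => (hY y).1
    · exact MDP.iisum fun i _ =>
        MDP.iisum fun j _ => (hIJ i j).1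
    · intro s hs
      exact MDP.pointwise hρ hσ hU hV hp hq eρ eσ M hMpos hMsum hs.1 hs.2
  rw [intervalIntegral.integral_finsetSum fun y _ => (hY y).1,
    intervalIntegral.integral_finsetSum fun i _ =>
        MDP.iisum fun j _ => (hIJ i j).1] at main
  simp only [(hY _).2] at main
  have step : ∀ i, ∫ s in (0:ℝ)..1, ∑ j, Complex.normSq ((Uᴴ * V) i j) * MDP.kk (p i) (q j) s
      = ∑ j, Complex.normSq ((Uᴴ * V) i j) *
          (p i * Real.log (p i) - p i * Real.log (q j) - (p i - q j)) := by
    intro i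
    rw [intervalIntegral.integral_finsetSum fun j _ => (hIJ i j).1]
    exact Finset.sum_congr rfl fun j _ => (hIJ i j).2
  simp only [step] at main
  -- normalisations
  have nP : ∑ y, (ρ * M y).trace.re = 1 := by
    rw [← Complex.re_sum, ← Matrix.trace_sum, ← Finset.mul_sum, hMsum, mul_one, hρtr]; simp
  have nQ : ∑ y, (σ * M y).trace.re = 1 := by
    rw [← Complex.re_sum, ← Matrix.trace_sum, ← Finset.mul_sum, hMsum, mul_one, hσtr]; simp
  have wl : ∀ f : Fin d → ℝ, (U * Matrix.diagonal (fun i => (f i : ℂ)) * Uᴴ).trace.re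
      = ∑ i, ∑ j, f i * Complex.normSq ((Uᴴ * V) i j) := by
    intro f
    have := MDP.tr_left (U := U) hV f 1
    simpa only [mul_one, MDP.normSq_eq] using this
  have wr : ∀ f : Fin d → ℝ, (V * Matrix.diagonal (fun i => (f i : ℂ)) * Vᴴ).trace.re
      = ∑ i, ∑ j, f j * Complex.normSq ((Uᴴ * V) i j) := by
    intro f
    have := MDP.tr_right (V := V) hU f 1
    simpa only [mul_one, MDP.normSq_eq] using this
  have np := wl p
  rw [← eρ, hρtr, Complex.one_re] at np
  have nq := wr q
  rw [← eσ, hσtr, Complex.one_re] at nq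
  have tρ : (ρ * (U * Matrix.diagonal (fun i => (Real.log (p i) : ℂ)) * Uᴴ)).trace.re
      = ∑ i, ∑ j, (p i * Real.log (p i)) * Complex.normSq ((Uᴴ * V) i j) := by
    rw [← wl]
    congr 2
    rw [eρ]
    simp only [Matrix.mul_assoc]
    rw [← Matrix.mul_assoc Uᴴ U, hU', Matrix.one_mul, ← Matrix.mul_assoc (Matrix.diagonal _),
      Matrix.diagonal_mul_diagonal]
    simp
  have tσ : (ρ * (V * Matrix.diagonal (fun i => (Real.log (q i) : ℂ)) * Vᴴ)).trace.re
      = ∑ i, ∑ j, (p i * Real.log (q j)) * Complex.normSq ((Uᴴ * V) i j) := by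
    conv_lhs => rw [eρ]
    rw [MDP.tr_left hV]
    refine Finset.sum_congr rfl fun i _ => Finset.sum_congr rfl fun j _ => ?_
    have : Uᴴ * (V * Matrix.diagonal (fun i => (Real.log (q i) : ℂ)) * Vᴴ) * V
        = (Uᴴ * V) * Matrix.diagonal (fun i => (Real.log (q i) : ℂ)) := by
      simp only [Matrix.mul_assoc]
      rw [hV', Matrix.mul_one]
    rw [this, Matrix.mul_diagonal, mul_comm _ (Real.log (q j) : ℂ), mul_assoc,
      Complex.re_ofReal_mul, MDP.normSq_eq]
    ring
  rw [mul_sub, Matrix.trace_sub, Complex.sub_re, tρ, tσ]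
  rw [Finset.sum_sub_distrib, Finset.sum_sub_distrib, nP, nQ] at main
  have fin : ∑ i, ∑ j, Complex.normSq ((Uᴴ * V) i j) *
          (p i * Real.log (p i) - p i * Real.log (q j) - (p i - q j))
      = ∑ i, ∑ j, (p i * Real.log (p i)) * Complex.normSq ((Uᴴ * V) i j)
        - ∑ i, ∑ j, (p i * Real.log (q j)) * Complex.normSq ((Uᴴ * V) i j)
        - (∑ i, ∑ j, p i * Complex.normSq ((Uᴴ * V) i j)
          - ∑ i, ∑ j, q j * Complex.normSq ((Uᴴ * V) i j)) := by
    simp only [← Finset.sum_sub_distrib]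
    refine Finset.sum_congr rfl fun i _ => Finset.sum_congr rfl fun j _ => ?_
    ring
  rw [fin, ← np, ← nq] at main
  linarith
end

section
/- Holevo bound (finite dimensions, finite ensemble): let (π(θ), ρ_θ)_{θ∈Θ} be a finite ensemble of density matrices on ℂ^d and (M_y) a finite POVM with P_θ(y) = tr(ρ_θ M_y). Then the classical mutual information I(θ;Y) = Σ_θ π(θ) D(P_θ‖P̄) with P̄ = Σ_θ π(θ) P_θ satisfies I(θ;Y) ≤ χ := Σ_θ π(θ) D(ρ_θ‖ρ̄), where ρ̄ = Σ_θ π(θ) ρ_θ. -/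
open scoped Matrix BigOperators ComplexOrder

variable {d : ℕ}

open Filter Topology in
/-- Integrating a resolvent inequality gives the logarithmic inequality. -/
lemma hb_analytic {A B : Type*} [Fintype A] [Fintype B]
    (a u v : A → ℝ) (b u' v' : B → ℝ)
    (ha : ∀ k, a k ≠ 0 → 0 < u k ∧ 0 < v k)
    (hb : ∀ k, b k ≠ 0 → 0 < u' k ∧ 0 < v' k)
    (hab : ∑ k, a k = ∑ k, b k)
    (h : ∀ s : ℝ, 0 < s → ∑ k, b k * (u' k / (v' k + s * u' k))
      ≤ ∑ k, a k * (u k / (v k + s * u k))) :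
    ∑ k, b k * Real.log (u' k / v' k) ≤ ∑ k, a k * (Real.log (u k) - Real.log (v k)) := by
  have key : ∀ (a u v : ℝ), (a ≠ 0 → 0 < u ∧ 0 < v) → ∀ s : ℝ, 0 ≤ s →
      HasDerivAt (fun s => a * Real.log (v + s * u)) (a * (u / (v + s * u))) s := by
    intro a u v h s hs
    by_cases h0 : a = 0
    · subst h0; simpa using hasDerivAt_const s (0 : ℝ)
    · obtain ⟨hu, hv⟩ := h h0
      have h1 : HasDerivAt (fun s : ℝ => v + s * u) u s := by
        simpa using ((hasDerivAt_id s).mul_const u).const_add v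
      have hpos : v + s * u ≠ 0 := by positivity
      exact (h1.log hpos).const_mul a
  have klim : ∀ (a u v : ℝ), (a ≠ 0 → 0 < u ∧ 0 < v) →
      Tendsto (fun s : ℝ => a * (Real.log (v + s * u) - Real.log s)) atTop
        (𝓝 (a * Real.log u)) := by
    intro a u v h
    by_cases h0 : a = 0
    · subst h0; simp
    · obtain ⟨hu, hv⟩ := h h0
      have h1 : Tendsto (fun s : ℝ => v / s + u) atTop (𝓝 (0 + u)) :=
        (tendsto_const_nhds.div_atTop tendsto_id).add_const u
      rw [zero_add] at h1
      have h2 := ((Real.continuousAt_log hu.ne').tendsto.comp h1).const_mul a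
      refine h2.congr' ?_
      filter_upwards [eventually_gt_atTop (0 : ℝ)] with s hs
      have hpos : v + s * u ≠ 0 := by positivity
      rw [← Real.log_div hpos hs.ne']
      simp only [Function.comp]
      congr 2
      field_simp
  set G : ℝ → ℝ := fun s => ∑ k, a k * Real.log (v k + s * u k)
    - ∑ k, b k * Real.log (v' k + s * u' k) with hG
  have hGd : ∀ s : ℝ, 0 ≤ s → HasDerivAt G (∑ k, a k * (u k / (v k + s * u k))
      - ∑ k, b k * (u' k / (v' k + s * u' k))) s := by
    intro s hs
    exact (HasDerivAt.fun_sum fun k _ => key _ _ _ (ha k) s hs).sub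
      (HasDerivAt.fun_sum fun k _ => key _ _ _ (hb k) s hs)
  have hmono : MonotoneOn G (Set.Ici 0) := by
    refine monotoneOn_of_deriv_nonneg (convex_Ici 0)
      (fun s hs => (hGd s hs).continuousAt.continuousWithinAt) ?_ ?_
    · intro s hs
      rw [interior_Ici] at hs
      exact (hGd s (le_of_lt hs)).differentiableAt.differentiableWithinAt
    · intro s hs
      rw [interior_Ici] at hs
      rw [(hGd s (le_of_lt hs)).deriv]
      exact sub_nonneg.2 (h s hs)
  have hlim : Tendsto G atTop (𝓝 (∑ k, a k * Real.log (u k) - ∑ k, b k * Real.log (u' k))) := by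
    have h1 := (tendsto_finsetSum Finset.univ fun k _ => klim _ _ _ (ha k)).sub
      (tendsto_finsetSum Finset.univ fun k _ => klim _ _ _ (hb k))
    refine h1.congr fun s => ?_
    simp only [mul_sub, Finset.sum_sub_distrib, ← Finset.sum_mul, hab, hG]
    ring
  have hfin : G 0 ≤ ∑ k, a k * Real.log (u k) - ∑ k, b k * Real.log (u' k) := by
    refine ge_of_tendsto hlim ?_
    filter_upwards [eventually_ge_atTop (0 : ℝ)] with s hs
    exact hmono (Set.mem_Ici.2 le_rfl) hs hs
  have hlog : ∀ k, b k * Real.log (u' k / v' k)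
      = b k * Real.log (u' k) - b k * Real.log (v' k) := by
    intro k
    by_cases h0 : b k = 0
    · simp [h0]
    · rw [Real.log_div (hb k h0).1.ne' (hb k h0).2.ne', mul_sub]
  simp only [hG, zero_mul, add_zero] at hfin
  simp only [hlog, mul_sub, Finset.sum_sub_distrib]
  linarith

/-- Trace of a product in two diagonalizing bases. -/
lemma hb_trace (U V A B : Matrix (Fin d) (Fin d) ℂ) (f g : Fin d → ℂ) :
    Matrix.trace ((U * Matrix.diagonal f * Uᴴ) * A * (V * Matrix.diagonal g * Vᴴ) * Bᴴ)
      = ∑ i, ∑ j, f i * g j * ((Uᴴ * A * V) i j * star ((Uᴴ * B * V) i j)) := by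
  have h1 : Matrix.trace ((U * Matrix.diagonal f * Uᴴ) * A * (V * Matrix.diagonal g * Vᴴ) * Bᴴ)
      = Matrix.trace (Matrix.diagonal f * (((Uᴴ * A * V) * Matrix.diagonal g) * (Uᴴ * B * V)ᴴ)) := by
    have : (U * Matrix.diagonal f * Uᴴ) * A * (V * Matrix.diagonal g * Vᴴ) * Bᴴ
        = U * (Matrix.diagonal f * Uᴴ * A * (V * Matrix.diagonal g * Vᴴ) * Bᴴ) := by
      simp only [Matrix.mul_assoc]
    rw [this, Matrix.trace_mul_comm]
    simp only [Matrix.conjTranspose_mul, Matrix.conjTranspose_conjTranspose, Matrix.mul_assoc]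
  rw [h1, Matrix.trace]
  refine Finset.sum_congr rfl fun i _ => ?_
  rw [Matrix.diag_apply, Matrix.diagonal_mul, Matrix.mul_apply, Finset.mul_sum]
  refine Finset.sum_congr rfl fun j _ => ?_
  rw [Matrix.mul_diagonal, Matrix.conjTranspose_apply]
  ring

lemma hb_spec {A : Matrix (Fin d) (Fin d) ℂ} (hA : A.IsHermitian) :
    A = (hA.eigenvectorUnitary : Matrix (Fin d) (Fin d) ℂ) *
      Matrix.diagonal (fun i => (hA.eigenvalues i : ℂ)) *
      (hA.eigenvectorUnitary : Matrix (Fin d) (Fin d) ℂ)ᴴ := by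
  have := hA.spectral_theorem
  rw [Unitary.conjStarAlgAut_apply] at this
  exact this

lemma hb_trace_nonneg {A B : Matrix (Fin d) (Fin d) ℂ} (hA : A.PosSemidef) (hB : B.PosSemidef) :
    0 ≤ (Matrix.trace (A * B)).re := by
  have h := hb_spec hA.1
  set U := (hA.1.eigenvectorUnitary : Matrix (Fin d) (Fin d) ℂ)
  rw [h, Matrix.mul_assoc, Matrix.mul_assoc, Matrix.trace_mul_comm, Matrix.mul_assoc,
    Matrix.trace, Complex.re_sum]
  refine Finset.sum_nonneg fun i _ => ?_
  rw [Matrix.diag_apply, Matrix.diagonal_mul, Complex.re_ofReal_mul]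
  refine mul_nonneg (hA.eigenvalues_nonneg i) ?_
  have := (hB.conjTranspose_mul_mul_same U).diag_nonneg (i := i)
  exact (Complex.le_def.1 this).1

/-- Scalar completion of squares. -/
lemma hb_scalar (z c : ℂ) (p q s : ℝ) (hp : 0 ≤ p) (hq : 0 ≤ q) (hs : 0 < s) :
    2 * (p * (z * star c).re) - (q + s * p) * ‖z‖ ^ 2
      ≤ ‖c‖ ^ 2 * p * (p / (q + s * p)) := by
  have h1 : (z * star c).re ≤ ‖z‖ * ‖c‖ := by
    refine (Complex.re_le_norm _).trans ?_
    rw [norm_mul, norm_star]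
  have h2 : p * (z * star c).re ≤ p * (‖z‖ * ‖c‖) := mul_le_mul_of_nonneg_left h1 hp
  rcases hp.eq_or_lt with rfl | hp
  · simp; positivity
  · have hr : 0 < q + s * p := by positivity
    have : ‖c‖ ^ 2 * p * (p / (q + s * p)) - (2 * (p * (‖z‖ * ‖c‖)) - (q + s * p) * ‖z‖ ^ 2)
        = (p * ‖c‖ - (q + s * p) * ‖z‖) ^ 2 / (q + s * p) := by
      field_simp
      ring
    have h3 : 0 ≤ (p * ‖c‖ - (q + s * p) * ‖z‖) ^ 2 / (q + s * p) := by positivity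
    linarith

/-- Kadison-Schwarz inequality for a POVM. -/
lemma hb_ks {Y : Type*} [Fintype Y] (M : Y → Matrix (Fin d) (Fin d) ℂ)
    (hMpos : ∀ y, (M y).PosSemidef) (hMsum : ∑ y, M y = 1) (x : Y → ℝ)
    {σ : Matrix (Fin d) (Fin d) ℂ} (hσ : σ.PosSemidef) :
    (Matrix.trace (σ * ((∑ y, (x y : ℂ) • M y) * (∑ y, (x y : ℂ) • M y)))).re
      ≤ ∑ y, x y ^ 2 * (Matrix.trace (σ * M y)).re := by
  set X := ∑ y, (x y : ℂ) • M y with hX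
  have hXh : Xᴴ = X := by
    rw [hX, Matrix.conjTranspose_sum]
    refine Finset.sum_congr rfl fun y _ => ?_
    rw [Matrix.conjTranspose_smul, (hMpos y).1.eq]
    simp
  have hpos : (∑ y, ((x y : ℂ) • (1 : Matrix (Fin d) (Fin d) ℂ) - X) * M y
      * ((x y : ℂ) • (1 : Matrix (Fin d) (Fin d) ℂ) - X)ᴴ).PosSemidef :=
    Matrix.posSemidef_sum _ fun y _ => (hMpos y).mul_mul_conjTranspose_same _
  have heq : (∑ y, ((x y : ℂ) • (1 : Matrix (Fin d) (Fin d) ℂ) - X) * M y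
      * ((x y : ℂ) • (1 : Matrix (Fin d) (Fin d) ℂ) - X)ᴴ)
      = ∑ y, ((x y : ℂ) ^ 2) • M y - X * X := by
    have : ∀ y, ((x y : ℂ) • (1 : Matrix (Fin d) (Fin d) ℂ) - X) * M y
      * ((x y : ℂ) • (1 : Matrix (Fin d) (Fin d) ℂ) - X)ᴴ
      = ((x y : ℂ) ^ 2) • M y - X * ((x y : ℂ) • M y) - ((x y : ℂ) • M y) * X + X * M y * X := by
      intro y
      rw [Matrix.conjTranspose_sub, Matrix.conjTranspose_smul, hXh]
      simp only [Matrix.conjTranspose_one, sub_mul, mul_sub, Matrix.smul_mul, Matrix.mul_smul,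
        Matrix.one_mul, Matrix.mul_one, smul_smul, pow_two]
      simp
      abel
    simp only [this, Finset.sum_add_distrib, Finset.sum_sub_distrib, ← Finset.mul_sum,
      ← Finset.sum_mul, ← hX, hMsum]
    simp
  rw [heq] at hpos
  have h := hb_trace_nonneg hσ hpos
  rw [mul_sub, Matrix.trace_sub, Complex.sub_re, Finset.mul_sum, Matrix.trace_sum,
    Complex.re_sum] at h
  have h2 : ∀ y, (Matrix.trace (σ * (((x y : ℂ) ^ 2) • M y))).re
      = x y ^ 2 * (Matrix.trace (σ * M y)).re := by
    intro y
    rw [Matrix.mul_smul, Matrix.trace_smul, smul_eq_mul, ← Complex.ofReal_pow,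
      Complex.re_ofReal_mul]
  simp only [h2] at h
  linarith

/-- The resolvent inequality. -/
lemma hb_core {Y : Type*} [Fintype Y] (M : Y → Matrix (Fin d) (Fin d) ℂ)
    (hMpos : ∀ y, (M y).PosSemidef) (hMsum : ∑ y, M y = 1)
    {ρ σ : Matrix (Fin d) (Fin d) ℂ} (hρ : ρ.PosSemidef) (hσ : σ.PosSemidef)
    (U V : Matrix (Fin d) (Fin d) ℂ) (p q : Fin d → ℝ)
    (hU : U * Uᴴ = 1) (hV : V * Vᴴ = 1)
    (hp : ∀ i, 0 ≤ p i) (hq : ∀ i, 0 ≤ q i)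
    (hρe : ρ = U * Matrix.diagonal (fun i => (p i : ℂ)) * Uᴴ)
    (hσe : σ = V * Matrix.diagonal (fun i => (q i : ℂ)) * Vᴴ) (s : ℝ) (hs : 0 < s) :
    ∑ y, (Matrix.trace (ρ * M y)).re * ((Matrix.trace (ρ * M y)).re /
        ((Matrix.trace (σ * M y)).re + s * (Matrix.trace (ρ * M y)).re))
      ≤ ∑ k : Fin d × Fin d, (‖(Uᴴ * V) k.1 k.2‖ ^ 2 * p k.1) * (p k.1 / (q k.2 + s * p k.1)) := by
  set P : Y → ℝ := fun y => (Matrix.trace (ρ * M y)).re with hP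
  set Q : Y → ℝ := fun y => (Matrix.trace (σ * M y)).re with hQ
  have hP0 : ∀ y, 0 ≤ P y := fun y => hb_trace_nonneg hρ (hMpos y)
  have hQ0 : ∀ y, 0 ≤ Q y := fun y => hb_trace_nonneg hσ (hMpos y)
  set x : Y → ℝ := fun y => P y / (Q y + s * P y) with hx
  set X := ∑ y, (x y : ℂ) • M y with hX
  have hXh : Xᴴ = X := by
    rw [hX, Matrix.conjTranspose_sum]
    refine Finset.sum_congr rfl fun y _ => ?_
    rw [Matrix.conjTranspose_smul, (hMpos y).1.eq]
    simp
  have k1 := hb_ks M hMpos hMsum x hρ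
  have k2 := hb_ks M hMpos hMsum x hσ
  rw [← hX] at k1 k2
  have oneU : (1 : Matrix (Fin d) (Fin d) ℂ) = U * Matrix.diagonal (fun _ => 1) * Uᴴ := by
    rw [Matrix.diagonal_one, Matrix.mul_one, hU]
  have oneV : (1 : Matrix (Fin d) (Fin d) ℂ) = V * Matrix.diagonal (fun _ => 1) * Vᴴ := by
    rw [Matrix.diagonal_one, Matrix.mul_one, hV]
  have t0 : (Matrix.trace (ρ * X)).re = ∑ y, x y * P y := by
    rw [hX, Finset.mul_sum, Matrix.trace_sum, Complex.re_sum]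
    refine Finset.sum_congr rfl fun y _ => ?_
    rw [Matrix.mul_smul, Matrix.trace_smul, smul_eq_mul, Complex.re_ofReal_mul]
  have t1 : (Matrix.trace (ρ * X)).re
      = ∑ i, ∑ j, p i * ((Uᴴ * X * V) i j * star ((Uᴴ * V) i j)).re := by
    have := hb_trace U V X 1 (fun i => (p i : ℂ)) (fun _ => 1)
    rw [← oneV, ← hρe, Matrix.conjTranspose_one, Matrix.mul_one, Matrix.mul_one,
      Matrix.mul_one] at this
    rw [this]
    simp only [Complex.re_sum, mul_one, Complex.re_ofReal_mul]
  have hn : ∀ z : ℂ, z * star z = ((‖z‖ ^ 2 : ℝ) : ℂ) := by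
    intro z
    have := Complex.mul_conj' z
    push_cast
    exact this
  have t2 : (Matrix.trace (ρ * (X * X))).re
      = ∑ i, ∑ j, p i * ‖(Uᴴ * X * V) i j‖ ^ 2 := by
    have := hb_trace U V X X (fun i => (p i : ℂ)) (fun _ => 1)
    rw [← oneV, ← hρe, hXh, Matrix.mul_one, Matrix.mul_assoc] at this
    rw [this]
    simp only [Complex.re_sum, mul_one, hn, Complex.re_ofReal_mul, Complex.ofReal_re]
  have t3 : (Matrix.trace (σ * (X * X))).re
      = ∑ i, ∑ j, q j * ‖(Uᴴ * X * V) i j‖ ^ 2 := by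
    have := hb_trace U V X X (fun _ => 1) (fun i => (q i : ℂ))
    rw [← oneU, ← hσe, hXh, Matrix.one_mul, Matrix.mul_assoc, Matrix.trace_mul_comm,
      Matrix.mul_assoc] at this
    rw [this]
    simp only [Complex.re_sum, one_mul, hn, Complex.re_ofReal_mul, Complex.ofReal_re]
  have hval : ∀ y, P y * (P y / (Q y + s * P y))
      = 2 * (x y * P y) - x y ^ 2 * Q y - s * (x y ^ 2 * P y) := by
    intro y
    rcases (hP0 y).eq_or_lt with h | h
    · simp [hx, ← h]
    · have := hQ0 y
      have : 0 < Q y + s * P y := by positivity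
      simp only [hx]
      field_simp
      ring
  calc ∑ y, P y * (P y / (Q y + s * P y))
      = 2 * (∑ y, x y * P y) - ∑ y, x y ^ 2 * Q y - s * ∑ y, x y ^ 2 * P y := by
        simp only [hval, Finset.sum_sub_distrib, Finset.mul_sum]
    _ ≤ 2 * (Matrix.trace (ρ * X)).re - (Matrix.trace (σ * (X * X))).re
        - s * (Matrix.trace (ρ * (X * X))).re := by
        rw [t0]
        have := mul_le_mul_of_nonneg_left k1 hs.le
        linarith
    _ = ∑ i, ∑ j, (2 * (p i * ((Uᴴ * X * V) i j * star ((Uᴴ * V) i j)).re)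
          - (q j + s * p i) * ‖(Uᴴ * X * V) i j‖ ^ 2) := by
        rw [t1, t2, t3]
        simp only [Finset.mul_sum, ← Finset.sum_sub_distrib]
        refine Finset.sum_congr rfl fun i _ => Finset.sum_congr rfl fun j _ => ?_
        ring
    _ ≤ ∑ i, ∑ j, (‖(Uᴴ * V) i j‖ ^ 2 * p i) * (p i / (q j + s * p i)) :=
        Finset.sum_le_sum fun i _ => Finset.sum_le_sum fun j _ =>
          hb_scalar _ _ _ _ _ (hp i) (hq j) hs
    _ = _ := by rw [Fintype.sum_prod_type]

/-- Monotonicity of relative entropy under a measurement. -/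
lemma hb_mono {Y : Type*} [Fintype Y] (M : Y → Matrix (Fin d) (Fin d) ℂ)
    (hMpos : ∀ y, (M y).PosSemidef) (hMsum : ∑ y, M y = 1)
    {ρ σ : Matrix (Fin d) (Fin d) ℂ} (hρ : ρ.PosSemidef) (hσ : σ.PosSemidef)
    (c : ℝ) (hc : 0 < c) (hdom : (σ - (c : ℂ) • ρ).PosSemidef) :
    ∑ y, (Matrix.trace (ρ * M y)).re * Real.log ((Matrix.trace (ρ * M y)).re /
        (Matrix.trace (σ * M y)).re)
      ≤ qRelEntropy hρ.1 hσ.1 := by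
  have hρe := hb_spec hρ.1
  have hσe := hb_spec hσ.1
  have hp := hρ.eigenvalues_nonneg
  have hq := hσ.eigenvalues_nonneg
  have hU : (hρ.1.eigenvectorUnitary : Matrix (Fin d) (Fin d) ℂ)
      * (hρ.1.eigenvectorUnitary : Matrix (Fin d) (Fin d) ℂ)ᴴ = 1 :=
    Unitary.coe_mul_star_self hρ.1.eigenvectorUnitary
  have hV : (hσ.1.eigenvectorUnitary : Matrix (Fin d) (Fin d) ℂ)
      * (hσ.1.eigenvectorUnitary : Matrix (Fin d) (Fin d) ℂ)ᴴ = 1 :=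
    Unitary.coe_mul_star_self hσ.1.eigenvectorUnitary
  have hLρ : hermLog hρ.1 = (hρ.1.eigenvectorUnitary : Matrix (Fin d) (Fin d) ℂ) *
    Matrix.diagonal (fun i => (Real.log (hρ.1.eigenvalues i) : ℂ)) *
    (hρ.1.eigenvectorUnitary : Matrix (Fin d) (Fin d) ℂ)ᴴ := rfl
  have hLσ : hermLog hσ.1 = (hσ.1.eigenvectorUnitary : Matrix (Fin d) (Fin d) ℂ) *
    Matrix.diagonal (fun i => (Real.log (hσ.1.eigenvalues i) : ℂ)) *
    (hσ.1.eigenvectorUnitary : Matrix (Fin d) (Fin d) ℂ)ᴴ := rfl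
  unfold qRelEntropy
  rw [hLρ, hLσ]
  generalize (hρ.1.eigenvectorUnitary : Matrix (Fin d) (Fin d) ℂ) = U at *
  generalize (hσ.1.eigenvectorUnitary : Matrix (Fin d) (Fin d) ℂ) = V at *
  generalize hρ.1.eigenvalues = p at *
  generalize hσ.1.eigenvalues = q at *
  clear hLρ hLσ
  have hU' : Uᴴ * U = 1 := mul_eq_one_comm.1 hU
  have hV' : Vᴴ * V = 1 := mul_eq_one_comm.1 hV
  have oneV : (1 : Matrix (Fin d) (Fin d) ℂ) = V * Matrix.diagonal (fun _ => 1) * Vᴴ := by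
    rw [Matrix.diagonal_one, Matrix.mul_one, hV]
  have hn : ∀ z : ℂ, z * star z = ((‖z‖ ^ 2 : ℝ) : ℂ) := by
    intro z
    have := Complex.mul_conj' z
    push_cast
    exact this
  have hdd : ∀ (W : Matrix (Fin d) (Fin d) ℂ) (f g : Fin d → ℂ), Wᴴ * W = 1 →
      (W * Matrix.diagonal f * Wᴴ) * (W * Matrix.diagonal g * Wᴴ)
        = W * Matrix.diagonal (fun i => f i * g i) * Wᴴ := by
    intro W f g hW
    calc _ = W * Matrix.diagonal f * (Wᴴ * W) * Matrix.diagonal g * Wᴴ := by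
          simp only [Matrix.mul_assoc]
      _ = _ := by
          rw [hW, Matrix.mul_one, Matrix.mul_assoc W, Matrix.diagonal_mul_diagonal]
  -- trace of two diagonalized matrices
  have tr2 : ∀ f g : Fin d → ℝ,
      (Matrix.trace ((U * Matrix.diagonal (fun i => (f i : ℂ)) * Uᴴ)
        * (V * Matrix.diagonal (fun i => (g i : ℂ)) * Vᴴ))).re
      = ∑ i, ∑ j, f i * g j * ‖(Uᴴ * V) i j‖ ^ 2 := by
    intro f g
    have := hb_trace U V 1 1 (fun i => (f i : ℂ)) (fun i => (g i : ℂ))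
    rw [Matrix.conjTranspose_one, Matrix.mul_one, Matrix.mul_one, Matrix.mul_one] at this
    rw [this]
    simp only [Complex.re_sum, hn, ← Complex.ofReal_mul, Complex.ofReal_re]
  have tr1 : ∀ f : Fin d → ℝ,
      (Matrix.trace (U * Matrix.diagonal (fun i => (f i : ℂ)) * Uᴴ)).re
      = ∑ i, ∑ j, f i * ‖(Uᴴ * V) i j‖ ^ 2 := by
    intro f
    have := tr2 f (fun _ => 1)
    simp only [Complex.ofReal_one, ← oneV, Matrix.mul_one, mul_one] at this
    exact this
  have hsupp : ∀ i j, c * (p i * ‖(Uᴴ * V) i j‖ ^ 2) ≤ q j := by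
    intro i j
    set e : Fin d → ℝ := Pi.single j 1 with he
    have hE : (V * Matrix.diagonal (fun i => (e i : ℂ)) * Vᴴ).PosSemidef := by
      refine Matrix.PosSemidef.mul_mul_conjTranspose_same (Matrix.PosSemidef.diagonal ?_) V
      intro k
      simp only [he, Pi.single_apply, Pi.zero_apply]
      split_ifs <;> simp
    have h := hb_trace_nonneg hdom hE
    rw [sub_mul, Matrix.trace_sub, Complex.sub_re, Matrix.smul_mul, Matrix.trace_smul,
      smul_eq_mul, Complex.re_ofReal_mul, hρe, tr2, hσe, hdd V _ _ hV',
      Matrix.mul_assoc, Matrix.trace_mul_comm, Matrix.mul_assoc, hV', Matrix.mul_one,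
      Matrix.trace_diagonal] at h
    simp [he, Pi.single_apply] at h
    refine le_trans (mul_le_mul_of_nonneg_left ?_ hc.le) h
    exact Finset.single_le_sum (f := fun i => p i * ‖(Uᴴ * V) i j‖ ^ 2)
      (fun k _ => mul_nonneg (hp k) (sq_nonneg _)) (Finset.mem_univ i)
  have hrhs : (Matrix.trace (ρ * (U * Matrix.diagonal (fun i => (Real.log (p i) : ℂ)) * Uᴴ
      - V * Matrix.diagonal (fun i => (Real.log (q i) : ℂ)) * Vᴴ))).re
      = ∑ k : Fin d × Fin d, (‖(Uᴴ * V) k.1 k.2‖ ^ 2 * p k.1)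
        * (Real.log (p k.1) - Real.log (q k.2)) := by
    have h1 := tr1 (fun i => p i * Real.log (p i))
    have h2 := tr2 p (fun i => Real.log (q i))
    rw [mul_sub, Matrix.trace_sub, Complex.sub_re]
    rw [hρe, h2, hdd U _ _ hU']
    simp only [← Complex.ofReal_mul]
    rw [h1, Fintype.sum_prod_type, ← Finset.sum_sub_distrib]
    refine Finset.sum_congr rfl fun i _ => ?_
    rw [← Finset.sum_sub_distrib]
    refine Finset.sum_congr rfl fun j _ => ?_
    ring
  rw [hrhs]
  refine hb_analytic _ (fun k : Fin d × Fin d => p k.1) (fun k => q k.2) _ _ _ ?_ ?_ ?_ ?_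
  · rintro ⟨i, j⟩ h
    have hpi : 0 < p i := lt_of_le_of_ne (hp i) fun h0 => h (by simp [← h0])
    have hw : 0 < ‖(Uᴴ * V) i j‖ ^ 2 :=
      lt_of_le_of_ne (sq_nonneg _) fun h0 => h (by simp only [← h0, zero_mul])
    exact ⟨hpi, lt_of_lt_of_le (by positivity) (hsupp i j)⟩
  · intro y h
    have hP : 0 < (Matrix.trace (ρ * M y)).re :=
      lt_of_le_of_ne (hb_trace_nonneg hρ (hMpos y)) (Ne.symm h)
    refine ⟨hP, ?_⟩
    have h := hb_trace_nonneg hdom (hMpos y)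
    rw [sub_mul, Matrix.trace_sub, Complex.sub_re, Matrix.smul_mul, Matrix.trace_smul,
      smul_eq_mul, Complex.re_ofReal_mul] at h
    have : 0 < c * (Matrix.trace (ρ * M y)).re := by positivity
    linarith
  · rw [← Complex.re_sum, ← Matrix.trace_sum, ← Finset.mul_sum, hMsum, Matrix.mul_one]
    have := tr1 p
    rw [← hρe] at this
    rw [this, Fintype.sum_prod_type]
    simp only [mul_comm]
  · intro s hs
    exact hb_core M hMpos hMsum hρ hσ U V p q hU hV hp hq hρe hσe s hs

/-- Holevo bound (finite dimensions, finite ensemble): the classical mutual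
information of the measurement outcomes is bounded by the Holevo information
`χ = ∑_θ π(θ) D(ρ_θ‖ρ̄)`, where `ρ̄ = ∑_θ π(θ) ρ_θ`. -/
theorem holevo_bound {Θ Y : Type*} [Fintype Θ] [Fintype Y]
    (π : Θ → ℝ) (hπ0 : ∀ θ, 0 ≤ π θ) (hπ1 : ∑ θ, π θ = 1)
    (ρ : Θ → Matrix (Fin d) (Fin d) ℂ)
    (hρ : ∀ θ, (ρ θ).PosSemidef) (hρtr : ∀ θ, Matrix.trace (ρ θ) = 1)
    (hρbar : (∑ θ, (π θ : ℂ) • ρ θ).IsHermitian)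
    (M : Y → Matrix (Fin d) (Fin d) ℂ)
    (hMpos : ∀ y, (M y).PosSemidef) (hMsum : ∑ y, M y = 1) :
    ∑ θ, π θ * ∑ y, (Matrix.trace (ρ θ * M y)).re *
        Real.log ((Matrix.trace (ρ θ * M y)).re /
          (∑ θ', π θ' * (Matrix.trace (ρ θ' * M y)).re))
      ≤ ∑ θ, π θ * qRelEntropy (hρ θ).1 hρbar := by
  classical
  have hterm : ∀ θ, ((π θ : ℂ) • ρ θ).PosSemidef := fun θ =>
    (hρ θ).smul (by exact_mod_cast hπ0 θ)
  have hσ : (∑ θ, (π θ : ℂ) • ρ θ).PosSemidef :=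
    Matrix.posSemidef_sum _ fun θ _ => hterm θ
  refine Finset.sum_le_sum fun θ _ => ?_
  rcases (hπ0 θ).eq_or_lt with h0 | h0
  · simp [← h0]
  refine mul_le_mul_of_nonneg_left ?_ (hπ0 θ)
  have hdom : (∑ θ, (π θ : ℂ) • ρ θ - (π θ : ℂ) • ρ θ).PosSemidef := by
    rw [← Finset.add_sum_erase _ _ (Finset.mem_univ θ), add_sub_cancel_left]
    exact Matrix.posSemidef_sum _ fun θ _ => hterm θ
  have h := hb_mono M hMpos hMsum (hρ θ) hσ (π θ) h0 hdom
  have hQ : ∀ y, (Matrix.trace ((∑ θ, (π θ : ℂ) • ρ θ) * M y)).re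
      = ∑ θ', π θ' * (Matrix.trace (ρ θ' * M y)).re := by
    intro y
    rw [Finset.sum_mul, Matrix.trace_sum, Complex.re_sum]
    refine Finset.sum_congr rfl fun θ _ => ?_
    rw [Matrix.smul_mul, Matrix.trace_smul, smul_eq_mul, Complex.re_ofReal_mul]
  simp only [hQ] at h
  exact h
end
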